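/- arXiv:2505.03731 — 2 statements merged into one kernel-verified Lean document; each statement's English description precedes it below -/
import Mathlib

section
/- Let V and W be finite-dimensional complex vector spaces, let A, φ : V → W be linear maps, and set r = rank A. Suppose there exists ε > 0 such that rank(A + t·φ) = r for all real t with 0 < t < ε. Then φ maps the kernel of A into the range of A, i.e. for every v ∈ ker A one has φ(v) ∈ range A. -/
/-!
Suppose `v ∈ ker A` but `φ v ∉ range A`. Choose a linear projection `P` of `W` onto `range A` with
`P (φ v) = 0` and a linear section `s` of `A` over `range A`. Then `P ∘ (A + t • φ) ∘ s = 1 + t • B`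
for the endomorphism `B = P ∘ φ ∘ s` of `range A`, and this is invertible for all but finitely
many `t`. For such `t ≠ 0`, `P` maps `range (A + t • φ)` onto `range A` and kills its nonzero
element `φ v`, so `A + t • φ` has larger rank than `A`.
-/

theorem disjoint_range_ker_of_rank_le_finrank {K V W U : Type*} [DivisionRing K]
    [AddCommGroup V] [Module K V] [AddCommGroup W] [Module K W] [AddCommGroup U] [Module K U]
    [FiniteDimensional K U] {T : V →ₗ[K] W} {P : W →ₗ[K] U}
    (hPT : Function.Surjective (P ∘ₗ T)) (hrank : T.rank ≤ Module.finrank K U) :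
    Disjoint (LinearMap.range T) (LinearMap.ker P) := by
  have : FiniteDimensional K (LinearMap.range T) :=
    Module.rank_lt_aleph0_iff.mp (hrank.trans_lt Cardinal.natCast_lt_aleph0)
  have hsurj : Function.Surjective (P.domRestrict (LinearMap.range T)) := fun u ↦
    (hPT u).imp' T.rangeRestrict fun _ h ↦ h
  have hfinrank : Module.finrank K (LinearMap.range T) = Module.finrank K U :=
    (Module.finrank_le_of_rank_le hrank).antisymm (LinearMap.finrank_le_finrank_of_surjective hsurj)
  have hinj := (LinearMap.injective_iff_surjective_of_finrank_eq_finrank hfinrank).mpr hsurj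
  rw [LinearMap.disjoint_ker_iff_injOn]
  exact Set.injOn_iff_injective.mpr hinj

section

variable {K : Type*} [Field K]

theorem finite_setOf_not_isUnit_one_add_smul {R : Type*} [Ring R] [Algebra K R] {a : R}
    (ha : (spectrum K a).Finite) : {t : K | ¬ IsUnit (1 + t • a)}.Finite := by
  refine (ha.preimage (f := fun t : K ↦ -t⁻¹)
    (neg_injective.comp inv_injective).injOn).subset fun t ht ↦ ?_
  have ht₀ : t ≠ 0 := by
    rintro rfl
    simp at ht
  refine spectrum.mem_iff.mpr fun hunit ↦ ht ?_
  have hfactor : 1 + t • a = -(t • (algebraMap K R (-t⁻¹) - a)) := by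
    simp [Algebra.algebraMap_eq_smul_one, smul_sub, smul_smul, ht₀, add_comm]
  rw [hfactor, IsUnit.neg_iff]
  exact hunit.smul (Units.mk0 t ht₀)

variable {V W : Type*} [AddCommGroup V] [Module K V] [AddCommGroup W] [Module K W]

theorem mem_range_add_smul_of_mem_ker {A φ : V →ₗ[K] W} {v : V} (hv : v ∈ LinearMap.ker A)
    {t : K} (ht : t ≠ 0) : φ v ∈ LinearMap.range (A + t • φ) :=
  ⟨t⁻¹ • v, by simp [LinearMap.mem_ker.mp hv, smul_smul, ht]⟩

theorem map_ker_le_range_of_rank_eventually_eq_general (A φ : V →ₗ[K] W)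
    [FiniteDimensional K (LinearMap.range A)] (h : {t : K | (A + t • φ).rank ≤ A.rank}.Infinite) :
    (LinearMap.ker A).map φ ≤ LinearMap.range A := by
  rintro _ ⟨v, hv, rfl⟩
  by_contra hφv
  obtain ⟨P, hP, hPφv⟩ := LinearMap.exists_extend_of_notMem LinearMap.id hφv 0
  obtain ⟨s, hs⟩ := A.rangeRestrict.exists_rightInverse_of_surjective A.range_rangeRestrict
  let B : Module.End K (LinearMap.range A) := P ∘ₗ φ ∘ₗ s
  obtain ⟨t, htrank, ht⟩ := h.exists_notMem_finite
    ((finite_setOf_not_isUnit_one_add_smul (Module.End.finite_spectrum B)).insert 0)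
  obtain ⟨ht₀, htunit⟩ : t ≠ 0 ∧ IsUnit (1 + t • B) := by simpa using ht
  have hcompress : P ∘ₗ (A + t • φ) ∘ₗ s = 1 + t • B := by
    have hAs : A ∘ₗ s = (LinearMap.range A).subtype :=
      congrArg ((LinearMap.range A).subtype ∘ₗ ·) hs
    rw [LinearMap.add_comp, LinearMap.comp_add, hAs, hP, LinearMap.smul_comp, LinearMap.comp_smul,
      Module.End.one_eq_id]
  have hsurj : Function.Surjective (P ∘ₗ (A + t • φ)) := by
    refine Function.Surjective.of_comp (g := s) ?_
    rw [← LinearMap.coe_comp, LinearMap.comp_assoc, hcompress]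
    exact ((Module.End.isUnit_iff _).mp htunit).surjective
  have hdisj := disjoint_range_ker_of_rank_le_finrank hsurj
    (htrank.trans_eq (Module.finrank_eq_rank K _).symm)
  have hφv₀ : φ v = 0 :=
    Submodule.disjoint_def.mp hdisj _ (mem_range_add_smul_of_mem_ker hv ht₀) hPφv
  exact hφv (hφv₀ ▸ zero_mem _)

end

theorem infinite_setOf_of_forall_ofReal {p : ℂ → Prop} {ε : ℝ} (hε : 0 < ε)
    (hp : ∀ t : ℝ, 0 < t → t < ε → p t) : {z | p z}.Infinite := by
  refine ((Set.Ioo_infinite hε).image Complex.ofReal_injective.injOn).mono ?_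
  rintro _ ⟨t, ⟨ht, htε⟩, rfl⟩
  exact hp t ht htε

/-- If `rank (A + t • φ) = rank A` for all sufficiently small `t > 0`,
then `φ` maps the kernel of `A` into the range of `A`. -/
theorem map_ker_le_range_of_rank_eventually_eq
    (V W : Type*) [AddCommGroup V] [Module ℂ V] [FiniteDimensional ℂ V]
    [AddCommGroup W] [Module ℂ W] [FiniteDimensional ℂ W]
    (A φ : V →ₗ[ℂ] W) (r : ℕ) (hr : Module.finrank ℂ (LinearMap.range A) = r)
    (h : ∃ ε : ℝ, 0 < ε ∧ ∀ t : ℝ, 0 < t → t < ε →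
      Module.finrank ℂ (LinearMap.range (A + (t : ℂ) • φ)) = r) :
    ∀ v ∈ LinearMap.ker A, φ v ∈ LinearMap.range A := by
  obtain ⟨ε, hε, h⟩ := h
  have hrank (t : ℝ) (ht : 0 < t) (htε : t < ε) : (A + (t : ℂ) • φ).rank ≤ A.rank := by
    simp only [LinearMap.rank, ← Module.finrank_eq_rank, h t ht htε, hr, le_refl]
  exact Submodule.map_le_iff_le_comap.mp <|
    map_ker_le_range_of_rank_eventually_eq_general A φ (infinite_setOf_of_forall_ofReal hε hrank)
end

section
/- Let V and W be finite-dimensional complex vector spaces of dimensions n and m respectively, and let A : V → W be a linear map of rank r. Then the subspace {φ ∈ Hom(V,W) : φ(ker A) ⊆ range A} of Hom(V,W) has complex dimension n·m − (n−r)·(m−r). -/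
/-!
The space in question is the kernel of the linear map `φ ↦ (ker A ↪ V → W ↠ coker A)` from
`Hom(V, W)` to `Hom(ker A, coker A)`. Over a field this map is onto, because maps into a quotient
lift and maps on a subspace extend, so the kernel has codimension
`dim (ker A) * dim (coker A) = (n - r) * (m - r)`.
-/

open Module

section CommRing

variable {R M N : Type*} [CommRing R] [AddCommGroup M] [Module R M] [AddCommGroup N] [Module R N]

/-- The linear map from `Hom(M, N)` to `Hom(p, N ⧸ q)` that restricts to `p` and reduces modulo
`q`. It measures how far a map is from carrying `p` into `q`. -/
def restrictMkQ (p : Submodule R M) (q : Submodule R N) : (M →ₗ[R] N) →ₗ[R] p →ₗ[R] N ⧸ q :=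
  q.mkQ.compRight R ∘ₗ LinearMap.domRestrict' p

theorem restrictMkQ_apply (p : Submodule R M) (q : Submodule R N) (φ : M →ₗ[R] N) :
    restrictMkQ p q φ = q.mkQ ∘ₗ φ ∘ₗ p.subtype :=
  rfl

theorem ker_restrictMkQ (p : Submodule R M) (q : Submodule R N) :
    LinearMap.ker (restrictMkQ p q) = p.compatibleMaps q := by
  ext φ
  simp [restrictMkQ_apply, LinearMap.ext_iff, SetLike.le_def, Submodule.compatibleMaps]

end CommRing

section Field

variable {K V W : Type*} [Field K] [AddCommGroup V] [Module K V] [AddCommGroup W] [Module K W]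

theorem restrictMkQ_surjective (p : Submodule K V) (q : Submodule K W) :
    Function.Surjective (restrictMkQ p q) := by
  intro ψ
  obtain ⟨lift, mkQ_comp_lift⟩ := projective_lifting_property q.mkQ ψ q.mkQ_surjective
  obtain ⟨φ, φ_comp_subtype⟩ := lift.exists_extend
  exact ⟨φ, by rw [restrictMkQ_apply, φ_comp_subtype, mkQ_comp_lift]⟩

variable [FiniteDimensional K V] [FiniteDimensional K W]

theorem finrank_compatibleMaps_add_finrank_mul_finrank_quotient
    (p : Submodule K V) (q : Submodule K W) :
    finrank K (p.compatibleMaps q) + finrank K p * finrank K (W ⧸ q) =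
      finrank K V * finrank K W := by
  have rank_nullity := (restrictMkQ p q).finrank_range_add_finrank_ker
  rwa [LinearMap.range_eq_top.2 (restrictMkQ_surjective p q), finrank_top, ker_restrictMkQ,
    finrank_linearMap, finrank_linearMap, add_comm] at rank_nullity

theorem finrank_compatibleMaps_ker_range_general (A : V →ₗ[K] W) (n m r : ℕ)
    (hn : finrank K V = n) (hm : finrank K W = m) (hr : finrank K (LinearMap.range A) = r) :
    finrank K (Submodule.compatibleMaps (LinearMap.ker A) (LinearMap.range A)) =
      n * m - (n - r) * (m - r) := by
  have finrank_ker : finrank K (LinearMap.ker A) = n - r := by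
    rw [← hn, ← hr, ← A.finrank_range_add_finrank_ker, Nat.add_sub_cancel_left]
  have finrank_coker : finrank K (W ⧸ LinearMap.range A) = m - r := by
    rw [Submodule.finrank_quotient, hm, hr]
  rw [← finrank_ker, ← finrank_coker, ← hn, ← hm]
  exact Nat.eq_sub_of_add_eq (finrank_compatibleMaps_add_finrank_mul_finrank_quotient _ _)

end Field

/-- The space of linear maps `φ : V → W` with `φ (ker A) ⊆ range A` has complex dimension
`n * m - (n - r) * (m - r)`, where `n = dim V`, `m = dim W` and `r = rank A`. -/
theorem finrank_compatibleMaps_ker_range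
    (V W : Type*) [AddCommGroup V] [Module ℂ V] [FiniteDimensional ℂ V]
    [AddCommGroup W] [Module ℂ W] [FiniteDimensional ℂ W]
    (A : V →ₗ[ℂ] W) (n m r : ℕ)
    (hn : Module.finrank ℂ V = n) (hm : Module.finrank ℂ W = m)
    (hr : Module.finrank ℂ (LinearMap.range A) = r) :
    Module.finrank ℂ
      (Submodule.compatibleMaps (LinearMap.ker A) (LinearMap.range A)) =
      n * m - (n - r) * (m - r) :=
  finrank_compatibleMaps_ker_range_general A n m r hn hm hr
end
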